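/- Let f, g : ℝⁿ → [0,∞) be Borel measurable functions vanishing at infinity and let 0 < λ < 1. Then ∫_{ℝⁿ} (f ⋆_λ g)(v) dv ≥ ∫_{ℝⁿ} (f* ⋆_λ g*)(v) dv, where (f ⋆_λ g)(v) = sup{ f(x)^λ g(y)^{1−λ} : v = λx + (1−λ)y }. -/

import Mathlib

open MeasureTheory Filter Pointwise ENNReal

noncomputable section

/-- The sup-convolution `(f ⋆_λ g)(v) = sup {f(x)^λ g(y)^{1-λ} : v = λx + (1-λ)y}`. -/
def supConv {n : ℕ} (lam : ℝ) (f g : EuclideanSpace ℝ (Fin n) → ℝ)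
    (v : EuclideanSpace ℝ (Fin n)) : ℝ≥0∞ :=
  ⨆ (x : EuclideanSpace ℝ (Fin n)) (y : EuclideanSpace ℝ (Fin n))
    (_ : v = lam • x + (1 - lam) • y),
    ENNReal.ofReal (f x ^ lam * g y ^ (1 - lam))

/-- `A*`: the open origin-centered Euclidean ball with the same volume as `A`. -/
def rearrangedSet (n : ℕ) (A : Set (EuclideanSpace ℝ (Fin n))) :
    Set (EuclideanSpace ℝ (Fin n)) :=
  Metric.ball 0 ((volume A / volume (Metric.ball (0 : EuclideanSpace ℝ (Fin n)) 1)).toReal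
    ^ (1 / (n : ℝ)))

/-- The symmetric decreasing rearrangement `f*(x) = ∫₀^∞ 1_{{f>t}*}(x) dt`. -/
def symmDecRearrangement {n : ℕ} (f : EuclideanSpace ℝ (Fin n) → ℝ)
    (x : EuclideanSpace ℝ (Fin n)) : ℝ :=
  ∫ t in Set.Ioi (0 : ℝ), (rearrangedSet n {y | t < f y}).indicator (fun _ => (1 : ℝ)) x

/-!
At positive levels, `{f ⋆_λ g > t}` is the union of the Minkowski combinations
`λ{f > p} + (1 - λ){g > q}` over the rational `p, q > 0` with `p ^ λ * q ^ (1 - λ) > t`. For `f*`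
and `g*` each of them lies in the sum of the centered balls with volumes `vol (λ{f > p})` and
`vol ((1 - λ){g > q})`, whose volume is no larger by the Brunn–Minkowski inequality. Centered balls
are nested, so the volume of their union is the supremum of their volumes; hence the volumes of the
superlevel sets compare, and the layer-cake formula integrates this over `t`.

Brunn–Minkowski follows by scaling from the Prékopa–Leindler inequality for indicator functions.
Prékopa–Leindler holds on the real line because `|A| + |B| ≤ |A + B|` there, and it passes to
products by Tonelli's theorem.
-/

section LayerCake

theorem setOf_lt_iSup_indicator {α ι : Type*} (D : ι → Set α) (w : ι → ℝ≥0∞) (t : ℝ≥0∞) :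
    {x | t < ⨆ i, (D i).indicator (fun _ => w i) x} = ⋃ i ∈ {i | t < w i}, D i := by
  ext x
  simp only [Set.mem_ofPred_eq, lt_iSup_iff, Set.mem_iUnion]
  refine exists_congr fun i => ?_
  by_cases hx : x ∈ D i <;> simp [hx]

variable {α ι : Type*} [MeasurableSpace α] {μ ν : Measure α}

theorem volume_Ioi_restrict_ofReal_lt (a : ℝ≥0∞) :
    volume.restrict (Set.Ioi 0) {t : ℝ | ENNReal.ofReal t < a} = a := by
  rw [Measure.restrict_apply (measurableSet_lt ENNReal.measurable_ofReal measurable_const)]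
  rcases eq_or_ne a ⊤ with rfl | ha
  · simp
  · have hIoo : {t : ℝ | ENNReal.ofReal t < a} ∩ Set.Ioi 0 = Set.Ioo 0 a.toReal := by
      ext t
      rw [Set.mem_inter_iff, and_comm]
      exact and_congr_right fun ht => ENNReal.ofReal_lt_iff_lt_toReal (le_of_lt ht) ha
    rw [hIoo, Real.volume_Ioo, sub_zero, ENNReal.ofReal_toReal ha]

theorem lintegral_eq_lintegral_measure_ofReal_lt [SFinite μ] {f : α → ℝ≥0∞} (hf : Measurable f) :
    ∫⁻ x, f x ∂μ = ∫⁻ t in Set.Ioi (0 : ℝ), μ {x | ENNReal.ofReal t < f x} := by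
  have hS : MeasurableSet {p : α × ℝ | ENNReal.ofReal p.2 < f p.1} :=
    measurableSet_lt (by fun_prop) (by fun_prop)
  calc ∫⁻ x, f x ∂μ
      = ∫⁻ x, volume.restrict (Set.Ioi 0) {t : ℝ | ENNReal.ofReal t < f x} ∂μ := by
        simp only [volume_Ioi_restrict_ofReal_lt]
    _ = μ.prod (volume.restrict (Set.Ioi 0)) {p : α × ℝ | ENNReal.ofReal p.2 < f p.1} :=
        (Measure.prod_apply hS).symm
    _ = ∫⁻ t in Set.Ioi (0 : ℝ), μ {x | ENNReal.ofReal t < f x} := Measure.prod_apply_symm hS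

theorem measurable_measure_ofReal_lt (f : α → ℝ≥0∞) :
    Measurable fun t : ℝ => μ {x | ENNReal.ofReal t < f x} :=
  Antitone.measurable fun _ _ hst =>
    measure_mono fun _ hx => (ENNReal.ofReal_le_ofReal hst).trans_lt hx

theorem lintegral_iSup_indicator_mono {w : ι → ℝ≥0∞} {B C : ι → Set α} (hBC : ∀ i, B i ⊆ C i) :
    ∫⁻ x, ⨆ i, (B i).indicator (fun _ => w i) x ∂μ ≤
      ∫⁻ x, ⨆ i, (C i).indicator (fun _ => w i) x ∂μ :=
  lintegral_mono fun x => iSup_mono fun i =>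
    Set.indicator_le_indicator_of_subset (hBC i) (fun _ => zero_le) x

/-- By nestedness, each superlevel set on the left is an increasing union of the `B i`, so its
measure is a supremum of measures of single sets. -/
theorem lintegral_iSup_indicator_le_of_nested [Countable ι] [SFinite μ] [SFinite ν] {w : ι → ℝ≥0∞}
    {B C : ι → Set α} (hB : ∀ i, MeasurableSet (B i)) (hC : ∀ i, MeasurableSet (C i))
    (hnested : ∀ i j, B i ⊆ B j ∨ B j ⊆ B i) (hBC : ∀ i, μ (B i) ≤ ν (C i)) :
    ∫⁻ x, ⨆ i, (B i).indicator (fun _ => w i) x ∂μ ≤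
      ∫⁻ x, ⨆ i, (C i).indicator (fun _ => w i) x ∂ν := by
  rw [lintegral_eq_lintegral_measure_ofReal_lt
      (Measurable.iSup fun i => measurable_const.indicator (hB i)),
    lintegral_eq_lintegral_measure_ofReal_lt
      (Measurable.iSup fun i => measurable_const.indicator (hC i))]
  refine lintegral_mono fun t => ?_
  have hdir : DirectedOn (Function.onFun (· ⊆ ·) B) {i | ENNReal.ofReal t < w i} := fun i hi j hj =>
    (hnested i j).elim (fun h => ⟨j, hj, h, subset_rfl⟩) fun h => ⟨i, hi, subset_rfl, h⟩
  simp only [setOf_lt_iSup_indicator]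
  rw [measure_biUnion_eq_iSup (Set.to_countable _) hdir]
  exact iSup₂_le fun i hi => (hBC i).trans (measure_mono (Set.subset_biUnion_of_mem (u := C) hi))

theorem tendsto_lintegral_min_natCast {f : α → ℝ≥0∞} (hf : Measurable f) :
    Tendsto (fun N : ℕ => ∫⁻ x, min (f x) N ∂μ) atTop (nhds (∫⁻ x, f x ∂μ)) := by
  refine lintegral_tendsto_of_tendsto_of_monotone
    (fun N => (hf.min measurable_const).aemeasurable)
    (Eventually.of_forall fun x M N hMN => min_le_min le_rfl (Nat.cast_le.2 hMN))
    (Eventually.of_forall fun x => ?_)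
  simpa only [min_top_right] using
    (tendsto_const_nhds (x := f x)).min ENNReal.tendsto_nat_nhds_top

end LayerCake

section GeometricMean

variable {a b : ℝ}

theorem rpow_mul_rpow_le_weighted_add (ha : 0 < a) (hb : 0 < b) (hab : a + b = 1) (x y : ℝ≥0∞) :
    x ^ a * y ^ b ≤ ENNReal.ofReal a * x + ENNReal.ofReal b * y := by
  rcases eq_or_ne x ⊤ with rfl | hx
  · simp [ENNReal.mul_top, ha]
  rcases eq_or_ne y ⊤ with rfl | hy
  · simp [ENNReal.mul_top, hb]
  lift x to NNReal using hx
  lift y to NNReal using hy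
  have hNN := NNReal.geom_mean_le_arith_mean2_weighted ⟨a, ha.le⟩ ⟨b, hb.le⟩ x y (NNReal.eq hab)
  rw [← ENNReal.coe_rpow_of_nonneg _ ha.le, ← ENNReal.coe_rpow_of_nonneg _ hb.le,
    ENNReal.ofReal_eq_coe_nnreal ha.le, ENNReal.ofReal_eq_coe_nnreal hb.le]
  exact_mod_cast hNN

theorem lt_rpow_mul_rpow (ha : 0 < a) (hb : 0 < b) (hab : a + b = 1) {t x y : ℝ≥0∞}
    (hx : t < x) (hy : t < y) : t < x ^ a * y ^ b :=
  calc t = t ^ a * t ^ b := by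
        rw [← ENNReal.rpow_add_of_nonneg _ _ ha.le hb.le, hab, ENNReal.rpow_one]
    _ < x ^ a * y ^ b :=
        ENNReal.mul_lt_mul (ENNReal.rpow_lt_rpow hx ha) (ENNReal.rpow_lt_rpow hy hb)

end GeometricMean

section RealLine

variable {A B : Set ℝ}

/-- The translates `A + inf B` and `sup A + B` overlap in at most one point. -/
theorem volume_add_le_volume_add_of_isCompact (hA : IsCompact A) (hB : IsCompact B)
    (hAne : A.Nonempty) (hBne : B.Nonempty) : volume A + volume B ≤ volume (A + B) := by
  have hsup : sSup A ∈ A := hA.sSup_mem hAne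
  have hinf : sInf B ∈ B := hB.sInf_mem hBne
  have hdisj : AEDisjoint volume ((· + sInf B) '' A) ((sSup A + ·) '' B) := by
    refine measure_mono_null (t := {sSup A + sInf B}) ?_ Real.volume_singleton
    rintro _ ⟨⟨x, hx, rfl⟩, y, hy, hxy⟩
    have hxle : x ≤ sSup A := le_csSup hA.bddAbove hx
    have hley : sInf B ≤ y := csInf_le hB.bddBelow hy
    simp only [Set.mem_singleton_iff] at *
    linarith
  have hmeas : NullMeasurableSet ((sSup A + ·) '' B) :=
    (hB.image (by fun_prop)).measurableSet.nullMeasurableSet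
  calc volume A + volume B
      = volume ((· + sInf B) '' A) + volume ((sSup A + ·) '' B) := by simp
    _ = volume ((· + sInf B) '' A ∪ (sSup A + ·) '' B) := (measure_union₀ hmeas hdisj).symm
    _ ≤ volume (A + B) := by
        refine measure_mono (Set.union_subset ?_ ?_)
        · rintro _ ⟨x, hx, rfl⟩
          exact Set.add_mem_add hx hinf
        · rintro _ ⟨y, hy, rfl⟩
          exact Set.add_mem_add hsup hy

theorem volume_add_le_volume_add (hA : MeasurableSet A) (hB : MeasurableSet B)
    (hAne : A.Nonempty) (hBne : B.Nonempty) : volume A + volume B ≤ volume (A + B) := by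
  obtain ⟨a, ha⟩ := hAne
  obtain ⟨b, hb⟩ := hBne
  rw [hA.measure_eq_iSup_isCompact, hB.measure_eq_iSup_isCompact]
  simp_rw [iSup_and']
  refine ENNReal.biSup_add_biSup_le' ⟨∅, by simp⟩ ⟨∅, by simp⟩ ?_
  rintro K ⟨hKA, hK⟩ L ⟨hLB, hL⟩
  calc volume K + volume L
      ≤ volume (insert a K) + volume (insert b L) := by gcongr <;> exact Set.subset_insert _ _
    _ ≤ volume (insert a K + insert b L) :=
        volume_add_le_volume_add_of_isCompact (hK.insert a) (hL.insert b)
          (Set.insert_nonempty _ _) (Set.insert_nonempty _ _)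
    _ ≤ volume (A + B) := by
        gcongr
        exacts [Set.insert_subset ha hKA, Set.insert_subset hb hLB]

theorem volume_pos_smul {c : ℝ} (hc : 0 < c) (A : Set ℝ) :
    volume (c • A) = ENNReal.ofReal c * volume A := by
  simp [Measure.addHaar_smul, abs_of_pos hc]

end RealLine

section PrekopaLeindler

/-- The conclusion of the Prékopa–Leindler inequality, as a property of a measure `μ`. It passes
to products and to linear images, which reduces `ℝⁿ` to the real line. -/
def SatisfiesPrekopaLeindler {E : Type*} [AddCommMonoid E] [Module ℝ E] [MeasurableSpace E]
    (μ : Measure E) : Prop :=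
  ∀ ⦃a b : ℝ⦄, 0 < a → 0 < b → a + b = 1 → ∀ ⦃f g h : E → ℝ≥0∞⦄,
    Measurable f → Measurable g → Measurable h →
    (∀ x y, f x ^ a * g y ^ b ≤ h (a • x + b • y)) →
    (∫⁻ x, f x ∂μ) ^ a * (∫⁻ x, g x ∂μ) ^ b ≤ ∫⁻ x, h x ∂μ

section OneDimensional

variable {a b : ℝ} {f g h : ℝ → ℝ≥0∞}

theorem volume_superlevel_weighted_add_le (ha : 0 < a) (hb : 0 < b) (hab : a + b = 1)
    (hf : Measurable f) (hg : Measurable g) (hfg : ⨆ x, f x = ⨆ x, g x)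
    (hfgh : ∀ x y, f x ^ a * g y ^ b ≤ h (a • x + b • y)) (t : ℝ≥0∞) :
    ENNReal.ofReal a * volume {x | t < f x} + ENNReal.ofReal b * volume {x | t < g x} ≤
      volume {x | t < h x} := by
  by_cases ht : t < ⨆ x, f x
  · obtain ⟨x₀, hx₀⟩ := lt_iSup_iff.1 ht
    obtain ⟨y₀, hy₀⟩ := lt_iSup_iff.1 (hfg ▸ ht)
    rw [← volume_pos_smul ha, ← volume_pos_smul hb]
    refine (volume_add_le_volume_add ((measurableSet_lt measurable_const hf).const_smul₀ a)
      ((measurableSet_lt measurable_const hg).const_smul₀ b) (Set.Nonempty.smul_set ⟨x₀, hx₀⟩)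
      (Set.Nonempty.smul_set ⟨y₀, hy₀⟩)).trans (measure_mono ?_)
    rintro _ ⟨_, ⟨x, hx, rfl⟩, _, ⟨y, hy, rfl⟩, rfl⟩
    exact (lt_rpow_mul_rpow ha hb hab hx hy).trans_le (hfgh x y)
  · have hf_empty : {x | t < f x} = ∅ :=
      Set.eq_empty_of_forall_notMem fun x hx => ht (lt_iSup_iff.2 ⟨x, hx⟩)
    have hg_empty : {x | t < g x} = ∅ :=
      Set.eq_empty_of_forall_notMem fun x hx => ht (hfg ▸ lt_iSup_iff.2 ⟨x, hx⟩)
    simp [hf_empty, hg_empty]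

theorem weighted_add_lintegral_le_of_iSup_eq (ha : 0 < a) (hb : 0 < b) (hab : a + b = 1)
    (hf : Measurable f) (hg : Measurable g) (hh : Measurable h) (hfg : ⨆ x, f x = ⨆ x, g x)
    (hfgh : ∀ x y, f x ^ a * g y ^ b ≤ h (a • x + b • y)) :
    ENNReal.ofReal a * (∫⁻ x, f x) + ENNReal.ofReal b * (∫⁻ x, g x) ≤ ∫⁻ x, h x := by
  rw [lintegral_eq_lintegral_measure_ofReal_lt hf, lintegral_eq_lintegral_measure_ofReal_lt hg,
    lintegral_eq_lintegral_measure_ofReal_lt hh,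
    ← lintegral_const_mul _ (measurable_measure_ofReal_lt f),
    ← lintegral_const_mul _ (measurable_measure_ofReal_lt g),
    ← lintegral_add_left ((measurable_measure_ofReal_lt f).const_mul _)]
  exact lintegral_mono fun t =>
    volume_superlevel_weighted_add_le ha hb hab hf hg hfg hfgh (ENNReal.ofReal t)

theorem lintegral_rpow_mul_lintegral_rpow_le_of_iSup_ne_top (ha : 0 < a) (hb : 0 < b)
    (hab : a + b = 1) (hf : Measurable f) (hg : Measurable g) (hh : Measurable h)
    (hf_top : ⨆ x, f x ≠ ⊤) (hg_top : ⨆ x, g x ≠ ⊤)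
    (hfgh : ∀ x y, f x ^ a * g y ^ b ≤ h (a • x + b • y)) :
    (∫⁻ x, f x) ^ a * (∫⁻ x, g x) ^ b ≤ ∫⁻ x, h x := by
  set F := ⨆ x, f x
  set G := ⨆ x, g x
  rcases eq_or_ne F 0 with hF0 | hF0
  · simp [ENNReal.iSup_eq_zero.1 hF0, ha]
  rcases eq_or_ne G 0 with hG0 | hG0
  · simp [ENNReal.iSup_eq_zero.1 hG0, hb]
  have hFG0 : F⁻¹ ^ a * G⁻¹ ^ b ≠ 0 := by
    simp [ENNReal.rpow_eq_zero_iff, hF0, hG0, hf_top, hg_top]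
  have hFG_top : F⁻¹ ^ a * G⁻¹ ^ b ≠ ⊤ :=
    ENNReal.mul_ne_top (ENNReal.rpow_ne_top_of_nonneg ha.le (ENNReal.inv_ne_top.2 hF0))
      (ENNReal.rpow_ne_top_of_nonneg hb.le (ENNReal.inv_ne_top.2 hG0))
  have hscale (x y : ℝ≥0∞) :
      (F⁻¹ * x) ^ a * (G⁻¹ * y) ^ b = F⁻¹ ^ a * G⁻¹ ^ b * (x ^ a * y ^ b) := by
    rw [ENNReal.mul_rpow_of_nonneg _ _ ha.le, ENNReal.mul_rpow_of_nonneg _ _ hb.le,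
      mul_mul_mul_comm]
  have hiSup : ⨆ x, F⁻¹ * f x = ⨆ x, G⁻¹ * g x := by
    rw [← ENNReal.mul_iSup, ← ENNReal.mul_iSup, ENNReal.inv_mul_cancel hF0 hf_top,
      ENNReal.inv_mul_cancel hG0 hg_top]
  rw [← ENNReal.mul_le_mul_iff_right hFG0 hFG_top]
  calc F⁻¹ ^ a * G⁻¹ ^ b * ((∫⁻ x, f x) ^ a * (∫⁻ x, g x) ^ b)
      = (∫⁻ x, F⁻¹ * f x) ^ a * (∫⁻ x, G⁻¹ * g x) ^ b := by
        rw [lintegral_const_mul _ hf, lintegral_const_mul _ hg, hscale]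
    _ ≤ ENNReal.ofReal a * (∫⁻ x, F⁻¹ * f x) + ENNReal.ofReal b * (∫⁻ x, G⁻¹ * g x) :=
        rpow_mul_rpow_le_weighted_add ha hb hab _ _
    _ ≤ ∫⁻ x, F⁻¹ ^ a * G⁻¹ ^ b * h x :=
        weighted_add_lintegral_le_of_iSup_eq ha hb hab (hf.const_mul _) (hg.const_mul _)
          (hh.const_mul _) hiSup fun x y => by rw [hscale]; gcongr; exact hfgh x y
    _ = F⁻¹ ^ a * G⁻¹ ^ b * ∫⁻ x, h x := lintegral_const_mul _ hh

end OneDimensional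

theorem satisfiesPrekopaLeindler_volume_real :
    SatisfiesPrekopaLeindler (volume : Measure ℝ) := by
  intro a b ha hb hab f g h hf hg hh hfgh
  rcases eq_or_ne (∫⁻ x, f x) 0 with hf0 | hf0
  · simp [hf0, ha]
  rcases eq_or_ne (∫⁻ x, g x) 0 with hg0 | hg0
  · simp [hg0, hb]
  have hlim : Tendsto
      (fun N : ℕ => (∫⁻ x, min (f x) N) ^ a * (∫⁻ x, min (g x) N) ^ b) atTop
      (nhds ((∫⁻ x, f x) ^ a * (∫⁻ x, g x) ^ b)) :=
    ENNReal.Tendsto.mul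
      ((ENNReal.continuous_rpow_const.tendsto _).comp (tendsto_lintegral_min_natCast hf))
      (Or.inl (by simp [ENNReal.rpow_eq_zero_iff, hf0, ha.le]))
      ((ENNReal.continuous_rpow_const.tendsto _).comp (tendsto_lintegral_min_natCast hg))
      (Or.inl (by simp [ENNReal.rpow_eq_zero_iff, hg0, hb.le]))
  have hbdd (u : ℝ → ℝ≥0∞) (N : ℕ) : ⨆ x, min (u x) N ≠ ⊤ :=
    ne_top_of_le_ne_top (ENNReal.natCast_ne_top N) (iSup_le fun _ => min_le_right _ _)
  refine le_of_tendsto' hlim fun N =>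
    lintegral_rpow_mul_lintegral_rpow_le_of_iSup_ne_top ha hb hab (hf.min measurable_const)
      (hg.min measurable_const) hh (hbdd f N) (hbdd g N) fun x y => le_trans ?_ (hfgh x y)
  gcongr <;> exact min_le_left _ _

section

variable {E F : Type*} [AddCommMonoid E] [Module ℝ E] [MeasurableSpace E]
  [AddCommMonoid F] [Module ℝ F] [MeasurableSpace F] {μ : Measure E} {ν : Measure F}

theorem satisfiesPrekopaLeindler_dirac_zero :
    SatisfiesPrekopaLeindler (Measure.dirac (0 : E)) := by
  intro a b _ _ _ f g h hf hg hh hfgh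
  simpa only [lintegral_dirac' _ hf, lintegral_dirac' _ hg, lintegral_dirac' _ hh, smul_zero,
    add_zero] using hfgh 0 0

theorem SatisfiesPrekopaLeindler.prod [SFinite ν] (hμ : SatisfiesPrekopaLeindler μ)
    (hν : SatisfiesPrekopaLeindler ν) : SatisfiesPrekopaLeindler (μ.prod ν) := by
  intro a b ha hb hab f g h hf hg hh hfgh
  rw [lintegral_prod _ hf.aemeasurable, lintegral_prod _ hg.aemeasurable,
    lintegral_prod _ hh.aemeasurable]
  refine hμ ha hb hab hf.lintegral_prod_right' hg.lintegral_prod_right' hh.lintegral_prod_right'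
    fun x₁ x₂ => ?_
  exact hν ha hb hab (hf.comp measurable_prodMk_left) (hg.comp measurable_prodMk_left)
    (hh.comp measurable_prodMk_left) fun y₁ y₂ => hfgh (x₁, y₁) (x₂, y₂)

theorem SatisfiesPrekopaLeindler.of_measurePreserving (hμ : SatisfiesPrekopaLeindler μ)
    (φ : E →ₗ[ℝ] F) (hφ : MeasurePreserving φ μ ν) : SatisfiesPrekopaLeindler ν := by
  intro a b ha hb hab f g h hf hg hh hfgh
  rw [← hφ.lintegral_comp hf, ← hφ.lintegral_comp hg, ← hφ.lintegral_comp hh]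
  refine hμ ha hb hab (hf.comp hφ.measurable) (hg.comp hφ.measurable) (hh.comp hφ.measurable)
    fun x y => ?_
  simpa only [map_add, map_smul] using hfgh (φ x) (φ y)

end

theorem measurePreserving_finConsLinearEquiv (n : ℕ) :
    MeasurePreserving (Fin.consLinearEquiv ℝ fun _ : Fin (n + 1) => ℝ) := by
  convert (volume_preserving_piFinSuccAbove (fun _ : Fin (n + 1) => ℝ) 0).symm using 1
  funext p
  exact (Fin.insertNth_zero (α := fun _ => ℝ) p.1 p.2).symm

theorem satisfiesPrekopaLeindler_volume_pi (n : ℕ) :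
    SatisfiesPrekopaLeindler (volume : Measure (Fin n → ℝ)) := by
  induction n with
  | zero =>
    rw [volume_pi, Measure.pi_of_empty _ 0]
    exact satisfiesPrekopaLeindler_dirac_zero
  | succ n ih =>
    exact (satisfiesPrekopaLeindler_volume_real.prod ih).of_measurePreserving
      (Fin.consLinearEquiv ℝ fun _ : Fin (n + 1) => ℝ).toLinearMap
      (measurePreserving_finConsLinearEquiv n)

theorem satisfiesPrekopaLeindler_volume_euclideanSpace (n : ℕ) :
    SatisfiesPrekopaLeindler (volume : Measure (EuclideanSpace ℝ (Fin n))) :=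
  (satisfiesPrekopaLeindler_volume_pi n).of_measurePreserving
    (WithLp.linearEquiv 2 ℝ (Fin n → ℝ)).symm.toLinearMap (PiLp.volume_preserving_toLp (Fin n))

end PrekopaLeindler

section BrunnMinkowski

section

variable {E : Type*} [AddCommMonoid E] [Module ℝ E] [MeasurableSpace E] {μ : Measure E}
  {A B : Set E}

theorem SatisfiesPrekopaLeindler.measure_rpow_mul_measure_rpow_le
    (hμ : SatisfiesPrekopaLeindler μ) {a b : ℝ} (ha : 0 < a) (hb : 0 < b) (hab : a + b = 1)
    (hA : MeasurableSet A) (hB : MeasurableSet B) :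
    μ A ^ a * μ B ^ b ≤ μ (a • A + b • B) := by
  set C := toMeasurable μ (a • A + b • B)
  have hC : MeasurableSet C := measurableSet_toMeasurable _ _
  rw [← measure_toMeasurable (a • A + b • B), ← lintegral_indicator_one hA,
    ← lintegral_indicator_one hB, ← lintegral_indicator_one hC]
  refine hμ ha hb hab (measurable_one.indicator hA) (measurable_one.indicator hB)
    (measurable_one.indicator hC) fun x y => ?_
  by_cases hx : x ∈ A
  · by_cases hy : y ∈ B
    · have hxy : a • x + b • y ∈ C := subset_toMeasurable _ _
        (Set.add_mem_add (Set.smul_mem_smul_set hx) (Set.smul_mem_smul_set hy))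
      simp [hx, hy, hxy]
    · simp [hy, hb]
  · simp [hx, ha]

end

theorem measure_le_measure_add_of_nonempty {G : Type*} [AddCommGroup G] [MeasurableSpace G]
    (μ : Measure G) [μ.IsAddLeftInvariant] (A : Set G) {B : Set G}
    (hB : B.Nonempty) : μ A ≤ μ (A + B) := by
  obtain ⟨y, hy⟩ := hB
  calc μ A = μ (y +ᵥ A) := (measure_vadd μ y A).symm
    _ ≤ μ (A + B) := by
        rw [add_comm A]
        exact measure_mono (Set.vadd_set_subset_add hy)

variable {E : Type*} [NormedAddCommGroup E] [NormedSpace ℝ E] [MeasurableSpace E] [BorelSpace E]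
  [FiniteDimensional ℝ E] {μ : Measure E} [μ.IsAddHaarMeasure] {A B : Set E}

theorem addHaar_pos_smul {c : ℝ} (hc : 0 < c) (A : Set E) :
    μ (c • A) = ENNReal.ofReal c ^ Module.finrank ℝ E * μ A := by
  rw [Measure.addHaar_smul, abs_of_pos (by positivity), ENNReal.ofReal_pow hc.le]

theorem addHaar_inv_smul_eq_one {r : ℝ} (hr : 0 < r)
    (hA : μ A = ENNReal.ofReal r ^ Module.finrank ℝ E) : μ (r⁻¹ • A) = 1 := by
  rw [addHaar_pos_smul (inv_pos.2 hr), hA, ← mul_pow, ← ENNReal.ofReal_mul (by positivity),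
    inv_mul_cancel₀ hr.ne', ENNReal.ofReal_one, one_pow]

/-- Rescaling `A` and `B` to unit measure turns `(r + s)⁻¹ • (A + B)` into a convex combination
with weights `r / (r + s)` and `s / (r + s)`. -/
theorem SatisfiesPrekopaLeindler.ofReal_add_pow_le (hμ : SatisfiesPrekopaLeindler μ)
    (hA : MeasurableSet A) (hB : MeasurableSet B) {r s : ℝ} (hr : 0 < r) (hs : 0 < s)
    (hAr : μ A = ENNReal.ofReal r ^ Module.finrank ℝ E)
    (hBs : μ B = ENNReal.ofReal s ^ Module.finrank ℝ E) :
    ENNReal.ofReal (r + s) ^ Module.finrank ℝ E ≤ μ (A + B) := by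
  have hrs : 0 < r + s := add_pos hr hs
  have hcombo : (r / (r + s)) • r⁻¹ • A + (s / (r + s)) • s⁻¹ • B = (r + s)⁻¹ • (A + B) := by
    rw [smul_smul, smul_smul, smul_add]
    congr 2 <;> field_simp
  have hone : 1 ≤ μ ((r + s)⁻¹ • (A + B)) := by
    have hPL := hμ.measure_rpow_mul_measure_rpow_le (div_pos hr hrs) (div_pos hs hrs)
      (by field_simp) (hA.const_smul₀ r⁻¹) (hB.const_smul₀ s⁻¹)
    rwa [hcombo, addHaar_inv_smul_eq_one hr hAr, addHaar_inv_smul_eq_one hs hBs,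
      ENNReal.one_rpow, ENNReal.one_rpow, one_mul] at hPL
  calc ENNReal.ofReal (r + s) ^ Module.finrank ℝ E
      ≤ ENNReal.ofReal (r + s) ^ Module.finrank ℝ E * μ ((r + s)⁻¹ • (A + B)) :=
        le_mul_of_one_le_right' hone
    _ = μ (A + B) := by rw [← addHaar_pos_smul hrs, smul_inv_smul₀ hrs.ne']

theorem SatisfiesPrekopaLeindler.brunnMinkowski [Nontrivial E] (hμ : SatisfiesPrekopaLeindler μ)
    (hA : MeasurableSet A) (hB : MeasurableSet B) (hAne : A.Nonempty) (hBne : B.Nonempty) :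
    μ A ^ (Module.finrank ℝ E : ℝ)⁻¹ + μ B ^ (Module.finrank ℝ E : ℝ)⁻¹ ≤
      μ (A + B) ^ (Module.finrank ℝ E : ℝ)⁻¹ := by
  have hd : Module.finrank ℝ E ≠ 0 := Module.finrank_pos.ne'
  set d := Module.finrank ℝ E
  have hd_inv : 0 < (d : ℝ)⁻¹ := by positivity
  have hA_le : μ A ≤ μ (A + B) := measure_le_measure_add_of_nonempty μ A hBne
  have hB_le : μ B ≤ μ (A + B) := add_comm A B ▸ measure_le_measure_add_of_nonempty μ B hAne
  rcases eq_or_ne (μ A) 0 with hA0 | hA0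
  · rw [hA0, ENNReal.zero_rpow_of_pos hd_inv, zero_add]
    gcongr
  rcases eq_or_ne (μ B) 0 with hB0 | hB0
  · rw [hB0, ENNReal.zero_rpow_of_pos hd_inv, add_zero]
    gcongr
  rcases eq_or_ne (μ (A + B)) ⊤ with hAB | hAB
  · simp [hAB, ENNReal.top_rpow_of_pos hd_inv]
  have hroot {D : Set E} (hD0 : μ D ≠ 0) (hD : μ D ≤ μ (A + B)) :
      ∃ r : ℝ, 0 < r ∧ μ D ^ (d : ℝ)⁻¹ = ENNReal.ofReal r ∧ μ D = ENNReal.ofReal r ^ d := by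
    have hD_top : μ D ^ (d : ℝ)⁻¹ ≠ ⊤ :=
      ENNReal.rpow_ne_top_of_nonneg hd_inv.le (ne_top_of_le_ne_top hAB hD)
    have hD_pos : 0 < μ D ^ (d : ℝ)⁻¹ :=
      ENNReal.rpow_pos_of_nonneg (pos_iff_ne_zero.2 hD0) hd_inv.le
    refine ⟨_, ENNReal.toReal_pos hD_pos.ne' hD_top, (ENNReal.ofReal_toReal hD_top).symm, ?_⟩
    rw [ENNReal.ofReal_toReal hD_top, ENNReal.rpow_inv_natCast_pow hd]
  obtain ⟨r, hr, hAr, hAr_pow⟩ := hroot hA0 hA_le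
  obtain ⟨s, hs, hBs, hBs_pow⟩ := hroot hB0 hB_le
  calc μ A ^ (d : ℝ)⁻¹ + μ B ^ (d : ℝ)⁻¹
      = (ENNReal.ofReal (r + s) ^ d) ^ (d : ℝ)⁻¹ := by
        rw [hAr, hBs, ENNReal.pow_rpow_inv_natCast hd, ENNReal.ofReal_add hr.le hs.le]
    _ ≤ μ (A + B) ^ (d : ℝ)⁻¹ := by
        gcongr
        exact hμ.ofReal_add_pow_le hA hB hr hs hAr_pow hBs_pow

end BrunnMinkowski

section InnerApproximation

variable {X : Type*} [TopologicalSpace X] [MeasurableSpace X]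

theorem measurableSet_of_isSigmaCompact [T2Space X] [BorelSpace X] {K : Set X}
    (hK : IsSigmaCompact K) : MeasurableSet K := by
  obtain ⟨L, hL, rfl⟩ := hK
  exact MeasurableSet.iUnion fun k => (hL k).measurableSet

theorem isSigmaCompact_add {G : Type*} [TopologicalSpace G] [Add G] [ContinuousAdd G]
    {K L : Set G} (hK : IsSigmaCompact K) (hL : IsSigmaCompact L) : IsSigmaCompact (K + L) := by
  obtain ⟨K, hK, rfl⟩ := hK
  obtain ⟨L, hL, rfl⟩ := hL
  simp only [Set.iUnion_add, Set.add_iUnion]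
  exact isSigmaCompact_iUnion _ fun i =>
    isSigmaCompact_iUnion _ fun j => ((hK j).add (hL i)).isSigmaCompact

theorem exists_isSigmaCompact_subset_measure_eq {μ : Measure X} [μ.InnerRegular] {A : Set X}
    (hA : MeasurableSet A) : ∃ K ⊆ A, IsSigmaCompact K ∧ μ K = μ A := by
  rcases eq_or_ne (μ A) 0 with hA0 | hA0
  · exact ⟨∅, Set.empty_subset A, isSigmaCompact_empty, by rw [measure_empty, hA0]⟩
  obtain ⟨u, -, hu, hu_lim⟩ := exists_seq_strictMono_tendsto' (pos_iff_ne_zero.2 hA0)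
  choose K hKA hK huK using fun k => hA.exists_lt_isCompact (hu k).2
  have hKA' : ⋃ k, K k ⊆ A := Set.iUnion_subset hKA
  refine ⟨⋃ k, K k, hKA', isSigmaCompact_iUnion_of_isCompact K hK, (measure_mono hKA').antisymm ?_⟩
  exact le_of_tendsto' hu_lim fun k => (huK k).le.trans (measure_mono (Set.subset_iUnion K k))

end InnerApproximation

section Rearrangement

variable {n : ℕ}

/-- The radius of the ball `A*`. In positive dimension it takes the junk value `0` when `A` has
infinite volume. -/
def rearrangedRadius (n : ℕ) (A : Set (EuclideanSpace ℝ (Fin n))) : ℝ :=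
  (volume A / volume (Metric.ball (0 : EuclideanSpace ℝ (Fin n)) 1)).toReal ^ (1 / (n : ℝ))

theorem rearrangedSet_eq_ball (A : Set (EuclideanSpace ℝ (Fin n))) :
    rearrangedSet n A = Metric.ball 0 (rearrangedRadius n A) := rfl

theorem rearrangedSet_congr {A B : Set (EuclideanSpace ℝ (Fin n))} (h : volume A = volume B) :
    rearrangedSet n A = rearrangedSet n B := by
  simp only [rearrangedSet, h]

theorem rearrangedSet_mono {A B : Set (EuclideanSpace ℝ (Fin n))} (hAB : A ⊆ B)
    (hB : volume B ≠ ⊤) : rearrangedSet n A ⊆ rearrangedSet n B := by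
  have hB_div : volume B / volume (Metric.ball (0 : EuclideanSpace ℝ (Fin n)) 1) ≠ ⊤ :=
    ENNReal.div_ne_top hB (Metric.measure_ball_pos _ _ one_pos).ne'
  unfold rearrangedSet
  gcongr

theorem exists_rearrangedSet_add_eq_ball (A B : Set (EuclideanSpace ℝ (Fin n))) :
    ∃ R, rearrangedSet n A + rearrangedSet n B = Metric.ball 0 R := by
  rw [rearrangedSet_eq_ball, rearrangedSet_eq_ball]
  rcases le_or_gt (rearrangedRadius n A) 0 with hA | hA
  · exact ⟨0, by simp [Metric.ball_eq_empty.2 hA]⟩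
  rcases le_or_gt (rearrangedRadius n B) 0 with hB | hB
  · exact ⟨0, by simp [Metric.ball_eq_empty.2 hB]⟩
  exact ⟨_, by rw [ball_add_ball hA hB, add_zero]⟩

theorem isOpen_rearrangedSet_add (A B : Set (EuclideanSpace ℝ (Fin n))) :
    IsOpen (rearrangedSet n A + rearrangedSet n B) :=
  Metric.isOpen_ball.add_left

theorem rearrangedSet_add_subset_total (A B C D : Set (EuclideanSpace ℝ (Fin n))) :
    rearrangedSet n A + rearrangedSet n B ⊆ rearrangedSet n C + rearrangedSet n D ∨
      rearrangedSet n C + rearrangedSet n D ⊆ rearrangedSet n A + rearrangedSet n B := by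
  obtain ⟨r, hr⟩ := exists_rearrangedSet_add_eq_ball A B
  obtain ⟨s, hs⟩ := exists_rearrangedSet_add_eq_ball C D
  rw [hr, hs]
  exact (le_total r s).imp Metric.ball_subset_ball Metric.ball_subset_ball

variable [NeZero n] {A B : Set (EuclideanSpace ℝ (Fin n))}

theorem volume_ball_rpow_inv {r : ℝ} (hr : 0 ≤ r) :
    volume (Metric.ball (0 : EuclideanSpace ℝ (Fin n)) r) ^ (n : ℝ)⁻¹ =
      ENNReal.ofReal r * volume (Metric.ball (0 : EuclideanSpace ℝ (Fin n)) 1) ^ (n : ℝ)⁻¹ := by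
  rw [Measure.addHaar_ball _ _ hr, finrank_euclideanSpace_fin, ENNReal.ofReal_pow hr,
    ENNReal.mul_rpow_of_nonneg _ _ (by positivity), ENNReal.pow_rpow_inv_natCast (NeZero.ne n)]

theorem volume_rearrangedSet (hA : volume A ≠ ⊤) : volume (rearrangedSet n A) = volume A := by
  have hball : volume (Metric.ball (0 : EuclideanSpace ℝ (Fin n)) 1) ≠ 0 :=
    (Metric.measure_ball_pos _ _ one_pos).ne'
  rw [rearrangedSet, Measure.addHaar_ball _ _ (by positivity), finrank_euclideanSpace_fin,
    one_div, Real.rpow_inv_natCast_pow ENNReal.toReal_nonneg (NeZero.ne n),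
    ENNReal.ofReal_toReal (ENNReal.div_ne_top hA hball),
    ENNReal.div_mul_cancel hball measure_ball_lt_top.ne]

theorem volume_ne_zero_and_ne_top_of_rearrangedRadius_pos (hA : 0 < rearrangedRadius n A) :
    volume A ≠ 0 ∧ volume A ≠ ⊤ := by
  have hn : (n : ℝ)⁻¹ ≠ 0 := inv_ne_zero (NeZero.ne _)
  constructor <;> intro h <;> simp [rearrangedRadius, h, hn,
    ENNReal.top_div_of_ne_top measure_ball_lt_top.ne] at hA

theorem smul_rearrangedSet {c : ℝ} (hc : 0 < c) (A : Set (EuclideanSpace ℝ (Fin n))) :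
    c • rearrangedSet n A = rearrangedSet n (c • A) := by
  have hradius : rearrangedRadius n (c • A) = c * rearrangedRadius n A := by
    rw [rearrangedRadius, addHaar_pos_smul hc, finrank_euclideanSpace_fin, mul_div_assoc,
      ENNReal.toReal_mul, ENNReal.toReal_pow, ENNReal.toReal_ofReal hc.le,
      Real.mul_rpow (by positivity) ENNReal.toReal_nonneg, one_div,
      Real.pow_rpow_inv_natCast hc.le (NeZero.ne n), rearrangedRadius, one_div]
  rw [rearrangedSet_eq_ball, rearrangedSet_eq_ball, smul_ball hc.ne', smul_zero, hradius,
    Real.norm_of_nonneg hc.le]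

/-- The `n`-th root of the volume of a centered ball is proportional to its radius, so
Brunn–Minkowski is an equality for `A*` and `B*`. -/
theorem volume_rearrangedSet_add_le (hA : MeasurableSet A) (hB : MeasurableSet B) :
    volume (rearrangedSet n A + rearrangedSet n B) ≤ volume (A + B) := by
  rcases le_or_gt (rearrangedRadius n A) 0 with hr | hr
  · simp [rearrangedSet_eq_ball, Metric.ball_eq_empty.2 hr]
  rcases le_or_gt (rearrangedRadius n B) 0 with hs | hs
  · simp [rearrangedSet_eq_ball, Metric.ball_eq_empty.2 hs]
  obtain ⟨hA0, hA_top⟩ := volume_ne_zero_and_ne_top_of_rearrangedRadius_pos hr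
  obtain ⟨hB0, hB_top⟩ := volume_ne_zero_and_ne_top_of_rearrangedRadius_pos hs
  have hBM := (satisfiesPrekopaLeindler_volume_euclideanSpace n).brunnMinkowski hA hB
    (nonempty_of_measure_ne_zero hA0) (nonempty_of_measure_ne_zero hB0)
  rw [finrank_euclideanSpace_fin] at hBM
  have hn : 0 < (n : ℝ)⁻¹ := inv_pos.2 (Nat.cast_pos.2 (NeZero.pos n))
  rw [← ENNReal.rpow_le_rpow_iff hn]
  calc volume (rearrangedSet n A + rearrangedSet n B) ^ (n : ℝ)⁻¹
      = volume (rearrangedSet n A) ^ (n : ℝ)⁻¹ + volume (rearrangedSet n B) ^ (n : ℝ)⁻¹ := by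
        simp only [rearrangedSet_eq_ball]
        rw [ball_add_ball hr hs, add_zero, volume_ball_rpow_inv (by positivity),
          volume_ball_rpow_inv hr.le, volume_ball_rpow_inv hs.le, ENNReal.ofReal_add hr.le hs.le,
          add_mul]
    _ = volume A ^ (n : ℝ)⁻¹ + volume B ^ (n : ℝ)⁻¹ := by
        rw [volume_rearrangedSet hA_top, volume_rearrangedSet hB_top]
    _ ≤ volume (A + B) ^ (n : ℝ)⁻¹ := hBM

/-- `A + B` need not be measurable, and the lower integral only sees measurable subsets of it. -/
theorem exists_measurableSet_subset_add_volume_rearrangedSet_add_le (hA : MeasurableSet A)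
    (hB : MeasurableSet B) : ∃ C ⊆ A + B, MeasurableSet C ∧
      volume (rearrangedSet n A + rearrangedSet n B) ≤ volume C := by
  obtain ⟨K, hKA, hK, hK_vol⟩ := exists_isSigmaCompact_subset_measure_eq (μ := volume) hA
  obtain ⟨L, hLB, hL, hL_vol⟩ := exists_isSigmaCompact_subset_measure_eq (μ := volume) hB
  refine ⟨K + L, Set.add_subset_add hKA hLB,
    measurableSet_of_isSigmaCompact (isSigmaCompact_add hK hL), ?_⟩
  rw [← rearrangedSet_congr hK_vol, ← rearrangedSet_congr hL_vol]
  exact volume_rearrangedSet_add_le (measurableSet_of_isSigmaCompact hK)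
    (measurableSet_of_isSigmaCompact hL)

end Rearrangement

section SymmDecRearrangement

variable {n : ℕ} {f : EuclideanSpace ℝ (Fin n) → ℝ}

theorem symmDecRearrangement_nonneg (f : EuclideanSpace ℝ (Fin n) → ℝ)
    (x : EuclideanSpace ℝ (Fin n)) : 0 ≤ symmDecRearrangement f x :=
  integral_nonneg fun _ => Set.indicator_nonneg (fun _ _ => zero_le_one) _

/-- In dimension `0` the exponent `1 / n` is `0`, so every `A*` is the whole one-point space, and
the divergent integral defining `f*` takes the junk value `0`. -/
theorem symmDecRearrangement_fin_zero (f : EuclideanSpace ℝ (Fin 0) → ℝ) :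
    symmDecRearrangement f = 0 := by
  funext x
  have hx (A : Set (EuclideanSpace ℝ (Fin 0))) : x ∈ rearrangedSet 0 A := by
    simp [rearrangedSet, Subsingleton.elim x 0]
  simp [symmDecRearrangement, hx, Measure.real]

theorem superlevel_symmDecRearrangement_subset
    (hf : ∀ t : ℝ, 0 < t → volume {x | t < f x} < ⊤) {t : ℝ} (ht : 0 < t) :
    {x | t < symmDecRearrangement f x} ⊆ rearrangedSet n {x | t < f x} := by
  intro x hx
  by_contra hxt
  have hx_notMem {s : ℝ} (hts : t ≤ s) : x ∉ rearrangedSet n {y | s < f y} := fun hxs =>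
    hxt (rearrangedSet_mono (fun _ hy => hts.trans_lt hy) (hf t ht).ne hxs)
  have hle : symmDecRearrangement f x ≤ t :=
    calc symmDecRearrangement f x
        = ∫ s in Set.Ioc 0 t, (rearrangedSet n {y | s < f y}).indicator (fun _ => (1 : ℝ)) x :=
          setIntegral_eq_of_subset_of_forall_sdiff_eq_zero measurableSet_Ioi
            Set.Ioc_subset_Ioi_self fun s hs => Set.indicator_of_notMem
              (hx_notMem (le_of_lt (not_le.1 fun hst => hs.2 ⟨hs.1, hst⟩))) _
      _ ≤ 1 * volume.real (Set.Ioc 0 t) := by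
          refine (Real.le_norm_self _).trans
            (norm_setIntegral_le_of_norm_le_const measure_Ioc_lt_top fun s _ => ?_)
          exact (norm_indicator_le_norm_self _ _).trans_eq norm_one
      _ = t := by simp [ht.le]
  exact hle.not_gt hx

end SymmDecRearrangement

section SupConv

/-- Pairs of positive levels. The levels are rational so that suprema over all pairs are countable
and hence preserve measurability. -/
abbrev LevelPair := Set.Ioi (0 : ℚ) × Set.Ioi (0 : ℚ)

/-- The value `p ^ λ * q ^ (1 - λ)` which `f ⋆_λ g` exceeds on `λ • {p < f} + (1 - λ) • {q < g}`,
for a pair of levels `(p, q)`. -/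
def superlevelWeight (lam : ℝ) (i : LevelPair) : ℝ≥0∞ :=
  ENNReal.ofReal ((i.1 : ℝ) ^ lam * (i.2 : ℝ) ^ (1 - lam))

/-- The Minkowski combination `λ • {p < f} + (1 - λ) • {q < g}` of the superlevel sets of `f` and
`g` at a pair of levels `(p, q)`; these sets exhaust the superlevel sets of `f ⋆_λ g`. -/
def superlevelSum {E : Type*} [AddCommMonoid E] [Module ℝ E] (lam : ℝ) (f g : E → ℝ)
    (i : LevelPair) : Set E :=
  lam • {x | (i.1 : ℝ) < f x} + (1 - lam) • {y | (i.2 : ℝ) < g y}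

variable {n : ℕ} {lam : ℝ} {f g : EuclideanSpace ℝ (Fin n) → ℝ}

theorem ofReal_rpow_mul_rpow_le_iSup_superlevelWeight (hlam0 : 0 < lam) (hlam1 : lam < 1) {a b : ℝ}
    (ha : 0 ≤ a) (hb : 0 ≤ b) :
    ENNReal.ofReal (a ^ lam * b ^ (1 - lam)) ≤
      ⨆ (i : LevelPair) (_ : (i.1 : ℝ) < a ∧ (i.2 : ℝ) < b), superlevelWeight lam i := by
  rcases ha.eq_or_lt with rfl | ha
  · simp [hlam0.ne']
  rcases hb.eq_or_lt with rfl | hb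
  · simp [(sub_pos.2 hlam1).ne']
  obtain ⟨p, -, hpa, hp⟩ := Real.exists_seq_rat_strictMono_tendsto a
  obtain ⟨q, -, hqb, hq⟩ := Real.exists_seq_rat_strictMono_tendsto b
  have hlim : Tendsto (fun k => ENNReal.ofReal ((p k : ℝ) ^ lam * (q k : ℝ) ^ (1 - lam))) atTop
      (nhds (ENNReal.ofReal (a ^ lam * b ^ (1 - lam)))) :=
    ENNReal.tendsto_ofReal
      ((hp.rpow_const (Or.inl ha.ne')).mul (hq.rpow_const (Or.inl hb.ne')))
  refine le_of_tendsto hlim ?_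
  filter_upwards [hp.eventually_const_lt ha, hq.eventually_const_lt hb] with k hpk hqk
  exact le_iSup₂_of_le (⟨p k, Rat.cast_pos.1 hpk⟩, ⟨q k, Rat.cast_pos.1 hqk⟩)
    ⟨hpa k, hqb k⟩ le_rfl

theorem superlevelWeight_le_supConv (hlam0 : 0 < lam) (hlam1 : lam < 1)
    {i : LevelPair} {v : EuclideanSpace ℝ (Fin n)} (hv : v ∈ superlevelSum lam f g i) :
    superlevelWeight lam i ≤ supConv lam f g v := by
  obtain ⟨_, ⟨x, hx, rfl⟩, _, ⟨y, hy, rfl⟩, rfl⟩ := hv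
  refine le_iSup₂_of_le x y (le_iSup_of_le rfl (ENNReal.ofReal_le_ofReal ?_))
  have hp : (0 : ℝ) < i.1 := Rat.cast_pos.2 i.1.2
  have hq : (0 : ℝ) < i.2 := Rat.cast_pos.2 i.2.2
  have hfx : (0 : ℝ) ≤ f x := (hp.trans hx).le
  have : 0 ≤ 1 - lam := sub_nonneg.2 hlam1.le
  gcongr
  exacts [le_of_lt hx, le_of_lt hy]

theorem supConv_eq_iSup_indicator (hlam0 : 0 < lam) (hlam1 : lam < 1) (hf0 : ∀ x, 0 ≤ f x)
    (hg0 : ∀ x, 0 ≤ g x) (v : EuclideanSpace ℝ (Fin n)) :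
    supConv lam f g v =
      ⨆ i, (superlevelSum lam f g i).indicator (fun _ => superlevelWeight lam i) v := by
  apply le_antisymm
  · refine iSup₂_le fun x y => iSup_le fun hv => ?_
    refine (ofReal_rpow_mul_rpow_le_iSup_superlevelWeight hlam0 hlam1 (hf0 x) (hg0 y)).trans
      (iSup₂_le fun i hi => le_iSup_of_le i ?_)
    have hmem : v ∈ superlevelSum lam f g i := hv ▸
      Set.add_mem_add (Set.smul_mem_smul_set hi.1) (Set.smul_mem_smul_set hi.2)
    rw [Set.indicator_of_mem hmem]
  · exact iSup_le fun i =>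
      Set.indicator_le (fun _ hv => superlevelWeight_le_supConv hlam0 hlam1 hv) v

theorem superlevelSum_symmDecRearrangement_subset [NeZero n] (hlam0 : 0 < lam) (hlam1 : lam < 1)
    (hf : ∀ t : ℝ, 0 < t → volume {x | t < f x} < ⊤)
    (hg : ∀ t : ℝ, 0 < t → volume {x | t < g x} < ⊤) (i : LevelPair) :
    superlevelSum lam (symmDecRearrangement f) (symmDecRearrangement g) i ⊆
      rearrangedSet n (lam • {x | (i.1 : ℝ) < f x}) +
        rearrangedSet n ((1 - lam) • {y | (i.2 : ℝ) < g y}) := by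
  rw [← smul_rearrangedSet hlam0, ← smul_rearrangedSet (sub_pos.2 hlam1)]
  exact Set.add_subset_add
    (Set.smul_set_mono (superlevel_symmDecRearrangement_subset hf (Rat.cast_pos.2 i.1.2)))
    (Set.smul_set_mono (superlevel_symmDecRearrangement_subset hg (Rat.cast_pos.2 i.2.2)))

theorem exists_measurableSet_subset_superlevelSum [NeZero n] (lam : ℝ) (hf : Measurable f)
    (hg : Measurable g) (i : LevelPair) : ∃ C ⊆ superlevelSum lam f g i, MeasurableSet C ∧
      volume (rearrangedSet n (lam • {x | (i.1 : ℝ) < f x}) +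
        rearrangedSet n ((1 - lam) • {y | (i.2 : ℝ) < g y})) ≤ volume C :=
  exists_measurableSet_subset_add_volume_rearrangedSet_add_le
    ((measurableSet_lt measurable_const hf).const_smul₀ lam)
    ((measurableSet_lt measurable_const hg).const_smul₀ (1 - lam))

end SupConv

/-- Melbourne's rearrangement inequality for the sup-convolution:
`∫ (f ⋆_λ g) ≥ ∫ (f* ⋆_λ g*)`. -/
theorem stmt16 (n : ℕ) (lam : ℝ) (hlam0 : 0 < lam) (hlam1 : lam < 1)
    (f g : EuclideanSpace ℝ (Fin n) → ℝ)
    (hfmeas : Measurable f) (hgmeas : Measurable g)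
    (hf0 : ∀ x, 0 ≤ f x) (hg0 : ∀ x, 0 ≤ g x)
    (hfvan : ∀ t : ℝ, 0 < t → volume {x | t < f x} < ⊤)
    (hgvan : ∀ t : ℝ, 0 < t → volume {x | t < g x} < ⊤) :
    ∫⁻ v, supConv lam f g v ≥
      ∫⁻ v, supConv lam (symmDecRearrangement f) (symmDecRearrangement g) v := by
  obtain rfl | _ := eq_zero_or_neZero n
  · simp [symmDecRearrangement_fin_zero, supConv, hlam0.ne']
  choose C hC_subset hC hC_volume using exists_measurableSet_subset_superlevelSum lam hfmeas hgmeas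
  let w := superlevelWeight lam
  let B (i : LevelPair) := rearrangedSet n (lam • {x | (i.1 : ℝ) < f x}) +
    rearrangedSet n ((1 - lam) • {y | (i.2 : ℝ) < g y})
  calc ∫⁻ v, supConv lam (symmDecRearrangement f) (symmDecRearrangement g) v
      = ∫⁻ v, ⨆ i, (superlevelSum lam (symmDecRearrangement f) (symmDecRearrangement g)
          i).indicator (fun _ => w i) v :=
        lintegral_congr (supConv_eq_iSup_indicator hlam0 hlam1 (symmDecRearrangement_nonneg f)
          (symmDecRearrangement_nonneg g))
    _ ≤ ∫⁻ v, ⨆ i, (B i).indicator (fun _ => w i) v :=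
        lintegral_iSup_indicator_mono
          (superlevelSum_symmDecRearrangement_subset hlam0 hlam1 hfvan hgvan)
    _ ≤ ∫⁻ v, ⨆ i, (C i).indicator (fun _ => w i) v :=
        lintegral_iSup_indicator_le_of_nested
          (fun _ => (isOpen_rearrangedSet_add _ _).measurableSet) hC
          (fun _ _ => rearrangedSet_add_subset_total _ _ _ _) hC_volume
    _ ≤ ∫⁻ v, ⨆ i, (superlevelSum lam f g i).indicator (fun _ => w i) v :=
        lintegral_iSup_indicator_mono hC_subset
    _ = ∫⁻ v, supConv lam f g v :=
        (lintegral_congr (supConv_eq_iSup_indicator hlam0 hlam1 hf0 hg0)).symm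

end
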